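/- Let w : ℝ → ℝ be positive and 2n-times differentiable, and suppose the 2n-th derivative of 1/w is nonnegative on all of ℝ. Let x₁,…,xₙ be distinct real numbers with fundamental Lagrange polynomials l_k(x) = ∏_{l≠k}(x − x_l)/(x_k − x_l), and suppose all Fejér constants vanish: 2·∑_{l≠k} 1/(x_k − x_l) + w'(x_k)/w(x_k) = 0 for k = 1,…,n. Then for every x ∈ ℝ: w(x)·∑_{k=1}^n l_k(x)²/w(x_k) ≤ 1. -/

import Mathlib

open Real Filter Set Finset

/-!
The polynomial `P = ∑ k, l_k² / w (x k)` agrees with `1 / w` at the nodes, and the vanishing of the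
Fejér constants says exactly that `P'` agrees with `(1 / w)'` there too, so `P` is the Hermite
interpolant of `1 / w`. Counting zeros with Rolle's theorem gives the Hermite error formula
`1 / w - P = (1 / w)^(2n)(ξ) / (2n)! * ∏ k, (· - x k) ^ 2`, whose right-hand side is nonnegative.
-/

open Polynomial
open scoped Nat

section Rolle

variable {I : Set ℝ} {f : ℝ → ℝ} {S : Finset ℝ}

theorem exists_finset_deriv_eq_zero (hIc : I.OrdConnected) (hf : ContinuousOn f I)
    (hSI : ↑S ⊆ I) (hS : ∀ y ∈ S, f y = 0) :
    ∃ T : Finset ℝ, ↑T ⊆ I ∧ Disjoint S T ∧ #S ≤ #T + 1 ∧ ∀ y ∈ T, deriv f y = 0 := by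
  have rolle : ∀ a ∈ S, ∀ b ∈ S, a < b → ∃ c ∈ Ioo a b, deriv f c = 0 := fun a ha b hb hab ↦
    exists_deriv_eq_zero hab (hf.mono <| hIc.out (hSI ha) (hSI hb)) ((hS a ha).trans (hS b hb).symm)
  choose! c hc hc' using rolle
  let T : Finset ℝ := ((S ×ˢ S).filter fun p ↦ p.1 < p.2).image fun p ↦ c p.1 p.2
  have mem_T {y : ℝ} (hy : y ∈ T) : ∃ a ∈ S, ∃ b ∈ S, a < b ∧ c a b = y := by
    simpa [T, and_assoc] using hy
  refine ⟨T \ S, fun y hy ↦ ?_, disjoint_sdiff, card_le_sdiff_of_interleaved ?_, fun y hy ↦ ?_⟩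
  · obtain ⟨a, ha, b, hb, hab, rfl⟩ := mem_T (sdiff_subset hy)
    exact hIc.out (hSI ha) (hSI hb) (Ioo_subset_Icc_self (hc a ha b hb hab))
  · intro a ha b hb hab _
    have hT : c a b ∈ T := mem_image.2 ⟨(a, b), by simp [ha, hb, hab], rfl⟩
    exact ⟨c a b, hT, hc a ha b hb hab⟩
  · obtain ⟨a, ha, b, hb, hab, rfl⟩ := mem_T (sdiff_subset hy)
    exact hc' a ha b hb hab

theorem exists_iteratedDeriv_eq_zero (hIo : IsOpen I) (hIc : I.OrdConnected) {m : ℕ}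
    (hf : ContDiffOn ℝ m f I) (hSI : ↑S ⊆ I) (hm : m < #S) (hS : ∀ y ∈ S, f y = 0) :
    ∃ ξ ∈ I, iteratedDeriv m f ξ = 0 := by
  induction m generalizing f S with
  | zero =>
    obtain ⟨y, hy⟩ := card_pos.1 hm
    exact ⟨y, hSI hy, by simpa using hS y hy⟩
  | succ m ih =>
    obtain ⟨T, hTI, -, hST, hT⟩ := exists_finset_deriv_eq_zero hIc hf.continuousOn hSI hS
    rw [iteratedDeriv_succ']
    exact ih (hf.deriv_of_isOpen hIo (by simp)) hTI (by lia) hT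

theorem exists_iteratedDeriv_eq_zero_of_double_zeros (hIo : IsOpen I) (hIc : I.OrdConnected)
    (hf : ContDiffOn ℝ (2 * #S : ℕ) f I) (hSI : ↑S ⊆ I) (hS : ∀ y ∈ S, f y = 0)
    (hS' : ∀ y ∈ S, deriv f y = 0) {t : ℝ} (htI : t ∈ I) (htS : t ∉ S) (ht : f t = 0) :
    ∃ ξ ∈ I, iteratedDeriv (2 * #S) f ξ = 0 := by
  rcases hn : 2 * #S with _ | m
  · exact ⟨t, htI, by simpa using ht⟩
  obtain ⟨T, hTI, hdisj, hcard, hT⟩ := exists_finset_deriv_eq_zero (S := insert t S) hIc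
    hf.continuousOn (by simpa [Set.insert_subset_iff] using ⟨htI, hSI⟩) (by simpa [ht] using hS)
  rw [Finset.disjoint_insert_left] at hdisj
  rw [card_insert_of_notMem htS] at hcard
  rw [hn] at hf
  rw [iteratedDeriv_succ']
  refine exists_iteratedDeriv_eq_zero (S := S ∪ T) hIo hIc (hf.deriv_of_isOpen hIo (by simp))
    (by simpa using ⟨hSI, hTI⟩) ?_ fun y hy ↦ (Finset.mem_union.1 hy).elim (hS' y) (hT y)
  rw [card_union_of_disjoint hdisj.2]
  lia

end Rolle

section PolynomialDerivatives

theorem iterate_derivative_eq_C_of_natDegree_le {R : Type*} [Semiring R] {p : R[X]} {m : ℕ}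
    (hp : p.natDegree ≤ m) : derivative^[m] p = C (m ! • p.coeff m) := by
  have h : (derivative^[m] p).natDegree ≤ 0 :=
    (natDegree_iterate_derivative p m).trans (Nat.sub_eq_zero_of_le hp).le
  rw [eq_C_of_natDegree_le_zero h, coeff_iterate_derivative, zero_add, Nat.descFactorial_self]

theorem iteratedDeriv_polynomial_eval {𝕜 : Type*} [NontriviallyNormedField 𝕜] (p : 𝕜[X]) (m : ℕ) :
    iteratedDeriv m (fun y ↦ p.eval y) = fun y ↦ (derivative^[m] p).eval y := by
  induction m generalizing p with
  | zero => simp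
  | succ m ih =>
    have hp : deriv (fun y ↦ p.eval y) = fun y ↦ (derivative p).eval y := funext fun y ↦ p.deriv
    rw [iteratedDeriv_succ', hp, ih, Function.iterate_succ_apply]

end PolynomialDerivatives

section HermiteInterpolation

variable {ι : Type*} {I : Set ℝ} {f : ℝ → ℝ} {s : Finset ι} {x : ι → ℝ} {P : ℝ[X]} {t : ℝ}

theorem exists_iteratedDeriv_eq_factorial_mul_coeff (hIo : IsOpen I) (hIc : I.OrdConnected)
    (hf : ContDiffOn ℝ (2 * #s : ℕ) f I) (hxI : ∀ k ∈ s, x k ∈ I) (hx : Set.InjOn x s)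
    (hdeg : P.natDegree ≤ 2 * #s) (hP : ∀ k ∈ s, P.eval (x k) = f (x k))
    (hP' : ∀ k ∈ s, P.derivative.eval (x k) = deriv f (x k))
    (htI : t ∈ I) (htx : ∀ k ∈ s, t ≠ x k) (ht : P.eval t = f t) :
    ∃ ξ ∈ I, iteratedDeriv (2 * #s) f ξ = (2 * #s)! * P.coeff (2 * #s) := by
  classical
  have hPsmooth : ContDiff ℝ (2 * #s : ℕ) fun y ↦ P.eval y := by
    simpa [coe_aeval_eq_eval] using P.contDiff_aeval (𝕜 := ℝ) (2 * #s : ℕ)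
  have hzero : ∀ y ∈ s.image x, f y - P.eval y = 0 :=
    forall_mem_image.2 fun k hk ↦ by rw [hP k hk, sub_self]
  have hzero' : ∀ y ∈ s.image x, deriv (fun y ↦ f y - P.eval y) y = 0 :=
    forall_mem_image.2 fun k hk ↦ by
      have hfk : DifferentiableAt ℝ f (x k) :=
        (hf.contDiffAt (hIo.mem_nhds (hxI k hk))).differentiableAt
          (by have := card_pos.2 ⟨k, hk⟩; norm_cast; lia)
      rw [deriv_fun_sub hfk P.differentiableAt, P.deriv, hP' k hk, sub_self]
  have hcard : #(s.image x) = #s := card_image_of_injOn hx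
  obtain ⟨ξ, hξI, hξ⟩ := exists_iteratedDeriv_eq_zero_of_double_zeros hIo hIc
    (hcard ▸ hf.sub hPsmooth.contDiffOn) (by simpa [Set.subset_def] using hxI) hzero hzero' htI
    (by simpa [eq_comm] using htx) (by rw [ht, sub_self])
  rw [hcard, iteratedDeriv_fun_sub (hf.contDiffAt (hIo.mem_nhds hξI)) hPsmooth.contDiffAt,
    iteratedDeriv_polynomial_eval, iterate_derivative_eq_C_of_natDegree_le hdeg] at hξ
  exact ⟨ξ, hξI, by simpa only [eval_C, nsmul_eq_mul, sub_eq_zero] using hξ⟩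

open Lagrange in
theorem exists_hermite_interpolation_error (hIo : IsOpen I) (hIc : I.OrdConnected)
    (hf : ContDiffOn ℝ (2 * #s : ℕ) f I) (hxI : ∀ k ∈ s, x k ∈ I) (hx : Set.InjOn x s)
    (hdeg : P.degree < (2 * #s : ℕ)) (hP : ∀ k ∈ s, P.eval (x k) = f (x k))
    (hP' : ∀ k ∈ s, P.derivative.eval (x k) = deriv f (x k)) (ht : t ∈ I) :
    ∃ ξ ∈ I, f t - P.eval t
      = iteratedDeriv (2 * #s) f ξ / (2 * #s)! * (nodal s x).eval t ^ 2 := by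
  by_cases! htx : ∃ k ∈ s, t = x k
  · obtain ⟨k, hk, rfl⟩ := htx
    exact ⟨x k, hxI k hk, by simp [hP k hk, eval_nodal_at_node hk]⟩
  have hΩt : (nodal s x).eval t ^ 2 ≠ 0 := pow_ne_zero 2 (eval_nodal_not_at_node htx)
  -- `K` makes `Q` agree with `f` at `t` too, without disturbing the agreement at the nodes.
  set K : ℝ := (f t - P.eval t) / (nodal s x).eval t ^ 2 with hK
  set Q : ℝ[X] := P + C K * nodal s x ^ 2 with hQ
  have hQdeg : Q.natDegree ≤ 2 * #s := by
    refine natDegree_add_le_of_degree_le (natDegree_le_of_degree_le hdeg.le) ?_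
    exact (natDegree_C_mul_le _ _).trans (by simp [natDegree_pow])
  have hQcoeff : Q.coeff (2 * #s) = K := by
    have hΩ : (nodal s x ^ 2).coeff (2 * #s) = 1 := by
      simpa [natDegree_pow] using ((nodal_monic (s := s) (v := x)).pow 2).coeff_natDegree
    rw [hQ, coeff_add, coeff_C_mul, hΩ, coeff_eq_zero_of_degree_lt hdeg, zero_add, mul_one]
  obtain ⟨ξ, hξI, hξ⟩ := exists_iteratedDeriv_eq_factorial_mul_coeff hIo hIc hf hxI hx hQdeg
    (fun k hk ↦ by simp [hQ, hP k hk, eval_nodal_at_node hk])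
    (fun k hk ↦ by simp [hQ, hP' k hk, derivative_pow, eval_nodal_at_node hk])
    ht htx (by simp [hQ, hK, hΩt])
  refine ⟨ξ, hξI, ?_⟩
  rw [hξ, hQcoeff, mul_div_cancel_left₀ K (by positivity), hK, div_mul_cancel₀ _ hΩt]

theorem hermite_interpolation_le_of_iteratedDeriv_nonneg (hIo : IsOpen I) (hIc : I.OrdConnected)
    (hf : ContDiffOn ℝ (2 * #s : ℕ) f I) (hnn : ∀ y ∈ I, 0 ≤ iteratedDeriv (2 * #s) f y)
    (hxI : ∀ k ∈ s, x k ∈ I) (hx : Set.InjOn x s)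
    (hdeg : P.degree < (2 * #s : ℕ)) (hP : ∀ k ∈ s, P.eval (x k) = f (x k))
    (hP' : ∀ k ∈ s, P.derivative.eval (x k) = deriv f (x k)) (ht : t ∈ I) :
    P.eval t ≤ f t := by
  obtain ⟨ξ, hξI, hξ⟩ := exists_hermite_interpolation_error hIo hIc hf hxI hx hdeg hP hP' ht
  have := hnn ξ hξI
  exact sub_nonneg.1 (hξ ▸ by positivity)

end HermiteInterpolation

section GrunwaldPolynomial

variable {F ι : Type*} [Field F] [DecidableEq ι] {s : Finset ι} {x : ι → F} {k : ι}

theorem eval_derivative_lagrange_basis (hx : Set.InjOn x s) (hk : k ∈ s) :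
    (Lagrange.basis s x k).derivative.eval (x k) = ∑ j ∈ s.erase k, 1 / (x k - x j) := by
  rw [Lagrange.basis, derivative_prod_finset, eval_finsetSum]
  refine sum_congr rfl fun j _ ↦ ?_
  have hprod : (∏ i ∈ (s.erase k).erase j, Lagrange.basisDivisor (x k) (x i)).eval (x k) = 1 := by
    rw [eval_prod]
    refine prod_eq_one fun i hi ↦ Lagrange.eval_basisDivisor_left_of_ne fun h ↦ ?_
    have hi' := mem_of_mem_erase hi
    exact ne_of_mem_erase hi' (hx (mem_of_mem_erase hi') hk h.symm)
  rw [eval_mul, hprod]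
  simp [Lagrange.basisDivisor]

theorem eval_lagrange_basis (t : F) :
    (Lagrange.basis s x k).eval t = ∏ j ∈ s.erase k, (t - x j) / (x k - x j) := by
  simp [Lagrange.basis, Lagrange.basisDivisor, eval_prod, div_eq_inv_mul]

/-- The Grünwald polynomial `∑ k ∈ s, r k * l_k²` of the data `r` at the nodes `x k`, `k ∈ s`, where
`l_k` is the fundamental Lagrange polynomial: Hermite interpolation with the linear factors of the
fundamental polynomials dropped. -/
noncomputable def grunwaldPolynomial (s : Finset ι) (x r : ι → F) : F[X] :=
  ∑ k ∈ s, C (r k) * Lagrange.basis s x k ^ 2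

variable (r : ι → F)

theorem degree_grunwaldPolynomial_lt (hx : Set.InjOn x s) :
    (grunwaldPolynomial s x r).degree < (2 * #s : ℕ) := by
  refine (degree_sum_le _ _).trans_lt ((Finset.sup_lt_iff (WithBot.bot_lt_coe _)).2 fun k hk ↦ ?_)
  refine degree_le_natDegree.trans_lt (Nat.cast_lt.2 ?_)
  calc (C (r k) * Lagrange.basis s x k ^ 2).natDegree
      ≤ (Lagrange.basis s x k ^ 2).natDegree := natDegree_C_mul_le _ _
    _ = 2 * (#s - 1) := by rw [natDegree_pow, Lagrange.natDegree_basis hx hk]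
    _ < 2 * #s := by have := card_pos.2 ⟨k, hk⟩; lia

theorem eval_grunwaldPolynomial (t : F) :
    (grunwaldPolynomial s x r).eval t
      = ∑ k ∈ s, r k * (∏ j ∈ s.erase k, (t - x j) / (x k - x j)) ^ 2 := by
  simp [grunwaldPolynomial, eval_finsetSum, eval_lagrange_basis]

theorem eval_grunwaldPolynomial_node (hx : Set.InjOn x s) (hk : k ∈ s) :
    (grunwaldPolynomial s x r).eval (x k) = r k := by
  rw [grunwaldPolynomial, eval_finsetSum, sum_eq_single_of_mem k hk]
  · simp [Lagrange.eval_basis_self hx hk]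
  · intro j _ hj
    simp [Lagrange.eval_basis_of_ne hj hk]

theorem eval_derivative_grunwaldPolynomial_node (hx : Set.InjOn x s) (hk : k ∈ s) :
    (grunwaldPolynomial s x r).derivative.eval (x k)
      = r k * (2 * ∑ j ∈ s.erase k, 1 / (x k - x j)) := by
  rw [grunwaldPolynomial, derivative_sum, eval_finsetSum, sum_eq_single_of_mem k hk]
  · simp [derivative_pow, Lagrange.eval_basis_self hx hk, eval_derivative_lagrange_basis hx hk]
  · intro j _ hj
    simp [derivative_pow, Lagrange.eval_basis_of_ne hj hk]

end GrunwaldPolynomial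

section Fejer

variable {ι : Type*} [DecidableEq ι] {w : ℝ → ℝ} {s : Finset ι} {x : ι → ℝ} {k : ι}

/-- The Fejér constant `C_{k,w}` of the weight `w` at the node `x k` of the system `x j`, `j ∈ s`.
It vanishes exactly when the Grünwald polynomial of `1 / w` has the derivative of `1 / w` there. -/
noncomputable def fejerConstant (w : ℝ → ℝ) (s : Finset ι) (x : ι → ℝ) (k : ι) : ℝ :=
  2 * ∑ j ∈ s.erase k, 1 / (x k - x j) + deriv w (x k) / w (x k)

theorem eval_derivative_grunwaldPolynomial_of_fejerConstant_eq_zero (hx : Set.InjOn x s)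
    (hk : k ∈ s) (hw : w (x k) ≠ 0) (hw' : DifferentiableAt ℝ w (x k))
    (hC : fejerConstant w s x k = 0) :
    (grunwaldPolynomial s x fun j ↦ 1 / w (x j)).derivative.eval (x k)
      = deriv (fun y ↦ 1 / w y) (x k) := by
  have hdiv : deriv (fun y ↦ 1 / w y) (x k) = -deriv w (x k) / w (x k) ^ 2 := by
    simpa only [one_div] using (hw'.hasDerivAt.fun_inv hw).deriv
  rw [eval_derivative_grunwaldPolynomial_node _ hx hk, eq_neg_of_add_eq_zero_left hC, hdiv]
  field_simp

end Fejer

theorem grunwald_kernel_le_one_of_fejer_constants_vanish_general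
    {ι : Type*} [DecidableEq ι] {I : Set ℝ} (hIo : IsOpen I) (hIc : I.OrdConnected)
    {w : ℝ → ℝ} (hw_pos : ∀ y ∈ I, 0 < w y)
    {s : Finset ι} (hw_smooth : ContDiffOn ℝ (2 * #s : ℕ) w I)
    (hnn : ∀ y ∈ I, 0 ≤ iteratedDeriv (2 * #s) (fun t => 1 / w t) y)
    {x : ι → ℝ} (hxI : ∀ k ∈ s, x k ∈ I) (hx : Set.InjOn x s)
    (hfejer : ∀ k ∈ s, fejerConstant w s x k = 0) {t : ℝ} (ht : t ∈ I) :
    w t * ∑ k ∈ s, (∏ j ∈ s.erase k, (t - x j) / (x k - x j)) ^ 2 / w (x k) ≤ 1 := by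
  let P := grunwaldPolynomial s x fun k ↦ 1 / w (x k)
  have hw_ne : ∀ y ∈ I, w y ≠ 0 := fun y hy ↦ (hw_pos y hy).ne'
  have hP' : ∀ k ∈ s, P.derivative.eval (x k) = deriv (fun y ↦ 1 / w y) (x k) := fun k hk ↦ by
    have hwk : DifferentiableAt ℝ w (x k) :=
      (hw_smooth.contDiffAt (hIo.mem_nhds (hxI k hk))).differentiableAt
        (by have := card_pos.2 ⟨k, hk⟩; norm_cast; lia)
    exact eval_derivative_grunwaldPolynomial_of_fejerConstant_eq_zero hx hk
      (hw_ne _ (hxI k hk)) hwk (hfejer k hk)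
  have hle : P.eval t ≤ 1 / w t :=
    hermite_interpolation_le_of_iteratedDeriv_nonneg (f := fun y ↦ 1 / w y) hIo hIc
      (contDiffOn_const.div hw_smooth hw_ne) hnn hxI hx (degree_grunwaldPolynomial_lt _ hx)
      (fun k hk ↦ eval_grunwaldPolynomial_node _ hx hk) hP' ht
  rw [le_div_iff₀' (hw_pos t ht), eval_grunwaldPolynomial] at hle
  simpa only [one_div_mul_eq_div] using hle

/-- Let `w` be positive and `2n`-times differentiable with
`(1/w)^{(2n)} ≥ 0` on all of `ℝ`. If all Fejér constants of the distinct nodes `x₁,…,xₙ`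
vanish, then the Grünwald kernel satisfies `w(x)·∑ₖ lₖ(x)²/w(xₖ) ≤ 1` for every real `x`. -/
theorem grunwald_kernel_le_one_of_fejer_constants_vanish
    (w : ℝ → ℝ) (hw_pos : ∀ x, 0 < w x)
    (n : ℕ) (hw_smooth : ContDiff ℝ (2 * n : ℕ) w)
    (hnn : ∀ x : ℝ, 0 ≤ iteratedDeriv (2 * n) (fun t => 1 / w t) x)
    (x : Fin n → ℝ) (hinj : Function.Injective x)
    (l : Fin n → ℝ → ℝ)
    (hl : ∀ k t, l k t = ∏ j ∈ Finset.univ.erase k, (t - x j) / (x k - x j))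
    (hfejer : ∀ k : Fin n,
      2 * ∑ j ∈ Finset.univ.erase k, 1 / (x k - x j) + deriv w (x k) / w (x k) = 0) :
    ∀ t : ℝ, w t * ∑ k, (l k t) ^ 2 / w (x k) ≤ 1 := by
  intro t
  simpa only [hl] using grunwald_kernel_le_one_of_fejer_constants_vanish_general isOpen_univ
    ordConnected_univ (fun y _ ↦ hw_pos y) (s := univ) (by simpa using hw_smooth.contDiffOn)
    (by simpa using hnn) (fun _ _ ↦ Set.mem_univ _) hinj.injOn (fun k _ ↦ hfejer k) (Set.mem_univ t)
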